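/- Given a setting (N,M,q), if a mechanism φ is r-locally partially strategyproof for some r > 0, then φ is r'-partially strategyproof for some r' > 0. -/

import Mathlib

open Finset

/-- A preference order on `M` is a strict total order, represented as a ranking
bijection to `Fin m` (rank `0` is the most preferred object).
`P a < P b` means that `P` ranks `a` above `b`. -/
def Consistent {M : Type*} {m : ℕ} (u : M → ℝ) (P : M ≃ Fin m) : Prop :=
  ∀ a b : M, P a < P b → u b < u a

/-- The minimal utility value `min_{j ∈ M} u(j)`. -/
noncomputable def minU {M : Type*} [Fintype M] [Nonempty M] (u : M → ℝ) : ℝ :=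
  Finset.univ.inf' Finset.univ_nonempty u

/-- `u` satisfies uniformly relatively bounded indifference with respect to `r`. -/
def URBI {M : Type*} [Fintype M] [Nonempty M] (u : M → ℝ) (r : ℝ) : Prop :=
  ∀ a b : M, u b < u a → u b - minU u ≤ r * (u a - minU u)

/-- `P'` is in the neighborhood of `P`: it is obtained from `P` by swapping two
consecutively ranked objects. -/
def Nbhd {M : Type*} {m : ℕ} (P P' : M ≃ Fin m) : Prop :=
  ∃ (k : ℕ) (h : k + 1 < m),
    P' = P.trans (Equiv.swap ⟨k, Nat.lt_of_succ_lt h⟩ ⟨k + 1, h⟩)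

/-- A feasible random assignment mechanism for the setting `(N, M, q)`:
entries are nonnegative, each agent's row sums to one, and no object is
assigned beyond its capacity. -/
def Feasible {N M : Type*} [Fintype N] [Fintype M] {m : ℕ} (q : M → ℕ)
    (φ : (N → M ≃ Fin m) → N → M → ℝ) : Prop :=
  ∀ P : N → M ≃ Fin m,
    (∀ i j, 0 ≤ φ P i j) ∧ (∀ i, ∑ j, φ P i j = 1) ∧ (∀ j, ∑ i, φ P i j ≤ (q j : ℝ))

/-- `φ` is `r`-partially strategyproof. -/
def PSP {N M : Type*} [DecidableEq N] [Fintype M] [Nonempty M] {m : ℕ}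
    (φ : (N → M ≃ Fin m) → N → M → ℝ) (r : ℝ) : Prop :=
  ∀ (P : N → M ≃ Fin m) (i : N) (P' : M ≃ Fin m) (u : M → ℝ),
    (∀ j, 0 ≤ u j) → Consistent u (P i) → URBI u r →
    ∑ j, u j * φ (Function.update P i P') i j ≤ ∑ j, u j * φ P i j

/-- `φ` is `r`-locally partially strategyproof: the incentive constraint is only
required for misreports in the neighborhood of the truthful report. -/
def LocalPSP {N M : Type*} [DecidableEq N] [Fintype M] [Nonempty M] {m : ℕ}
    (φ : (N → M ≃ Fin m) → N → M → ℝ) (r : ℝ) : Prop :=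
  ∀ (P : N → M ≃ Fin m) (i : N) (P' : M ≃ Fin m), Nbhd (P i) P' →
    ∀ u : M → ℝ, (∀ j, 0 ≤ u j) → Consistent u (P i) → URBI u r →
    ∑ j, u j * φ (Function.update P i P') i j ≤ ∑ j, u j * φ P i j

open Filter Function
open scoped Topology

/-!
For small `r`, a utility function satisfying URBI(`r`) decays so fast along the preference order
that expected utilities compare assignments of equal total mass lexicographically. Hence local
partial strategyproofness says that no swap of adjacent objects improves an agent's assignment
lexicographically. Using this in both directions, a swap either leaves the assignment unchanged, or
it preserves the probabilities of all objects ranked above the swapped pair and strictly increases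
that of the object moved up. Any misreport can be transformed into the truthful report by repeatedly
moving up the truthfully best object that is not yet in its place; no such move is a lexicographic
loss with respect to the *true* preferences. So truth-telling is lexicographically optimal, and as
there are finitely many agents and profiles, one small `r'` makes it optimal for all URBI(`r'`)
utilities.
-/

section DecayingWeights

variable {ι : Type*} [LinearOrder ι]

/-- Each weight is at most a fraction `ρ` of every earlier weight. Along a preference order this is
what URBI says about utilities normalized to have minimum zero. -/
def DecaysBy (ρ : ℝ) (w : ι → ℝ) : Prop :=
  ∀ ⦃i j⦄, i < j → w j ≤ ρ * w i

theorem decaysBy_pow {ρ : ℝ} (hρ₀ : 0 ≤ ρ) (hρ₁ : ρ ≤ 1) (m : ℕ) :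
    DecaysBy ρ fun k : Fin m ↦ ρ ^ (k : ℕ) := by
  intro i j hij
  rw [← pow_succ']
  exact pow_le_pow_of_le_one hρ₀ hρ₁ hij

variable [Fintype ι] {x y : ι → ℝ}

theorem DecaysBy.mul_sub_le_sum_mul {ρ : ℝ} {w d : ι → ℝ} {k : ι} (hw : DecaysBy ρ w)
    (hρ : 0 ≤ ρ) (hw₀ : ∀ j, 0 ≤ w j) (hd : ∀ j < k, d j = 0) :
    w k * (d k - ρ * ∑ j, |d j|) ≤ ∑ j, w j * d j := by
  have hρw : 0 ≤ ρ * w k := mul_nonneg hρ (hw₀ k)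
  have term_le (j : ι) : (if j = k then w k * d k else 0) - ρ * w k * |d j| ≤ w j * d j := by
    rcases lt_trichotomy j k with hjk | rfl | hkj
    · simp [hd j hjk, hjk.ne]
    · simpa using mul_nonneg hρw (abs_nonneg (d j))
    · calc (if j = k then w k * d k else 0) - ρ * w k * |d j|
          = -(ρ * w k * |d j|) := by rw [if_neg hkj.ne', zero_sub]
        _ ≤ -(w j * |d j|) := by gcongr; exact hw hkj
        _ = w j * -|d j| := by ring
        _ ≤ w j * d j := mul_le_mul_of_nonneg_left (neg_abs_le _) (hw₀ j)
  calc w k * (d k - ρ * ∑ j, |d j|)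
      = ∑ j, ((if j = k then w k * d k else 0) - ρ * w k * |d j|) := by
        rw [sum_sub_distrib, ← mul_sum, sum_ite_eq' univ k, if_pos (mem_univ k)]
        ring
    _ ≤ ∑ j, w j * d j := sum_le_sum fun j _ ↦ term_le j

theorem exists_eventually_mul_le_sum_sub_of_toLex_lt (h : toLex y < toLex x) :
    ∃ k, ∃ c > 0, ∀ᶠ ρ in 𝓝[>] (0 : ℝ), ∀ w : ι → ℝ, (∀ j, 0 ≤ w j) → DecaysBy ρ w →
      w k * c ≤ ∑ j, w j * x j - ∑ j, w j * y j := by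
  obtain ⟨k, hbefore, hk⟩ : ∃ k, (∀ j < k, y j = x j) ∧ y k < x k := h
  have hgap : 0 < x k - y k := sub_pos.2 hk
  refine ⟨k, (x k - y k) / 2, half_pos hgap, ?_⟩
  have htendsto : Tendsto (fun ρ ↦ x k - y k - ρ * ∑ j, |x j - y j|) (𝓝[>] 0) (𝓝 (x k - y k)) :=
    (Continuous.tendsto' (by fun_prop) 0 _ (by simp)).mono_left nhdsWithin_le_nhds
  filter_upwards [self_mem_nhdsWithin, htendsto.eventually_const_le (half_lt_self hgap)]
    with ρ hρ hhalf w hw₀ hw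
  calc w k * ((x k - y k) / 2)
      ≤ w k * (x k - y k - ρ * ∑ j, |x j - y j|) := mul_le_mul_of_nonneg_left hhalf (hw₀ k)
    _ ≤ ∑ j, w j * (x j - y j) :=
        hw.mul_sub_le_sum_mul (d := fun j ↦ x j - y j) (le_of_lt hρ) hw₀
          fun j hj ↦ sub_eq_zero.2 (hbefore j hj).symm
    _ = ∑ j, w j * x j - ∑ j, w j * y j := by simp only [mul_sub, sum_sub_distrib]

theorem eventually_sum_mul_lt_of_toLex_lt (h : toLex y < toLex x) :
    ∀ᶠ ρ in 𝓝[>] (0 : ℝ), ∀ w : ι → ℝ, (∀ j, 0 < w j) → DecaysBy ρ w →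
      ∑ j, w j * y j < ∑ j, w j * x j := by
  obtain ⟨k, c, hc, hbound⟩ := exists_eventually_mul_le_sum_sub_of_toLex_lt h
  filter_upwards [hbound] with ρ hρ w hw₀ hw
  exact sub_pos.1 <| (mul_pos (hw₀ k) hc).trans_le (hρ w (fun j ↦ (hw₀ j).le) hw)

theorem eventually_sum_mul_le_of_toLex_le (h : toLex y ≤ toLex x) :
    ∀ᶠ ρ in 𝓝[>] (0 : ℝ), ∀ w : ι → ℝ, (∀ j, 0 ≤ w j) → DecaysBy ρ w →
      ∑ j, w j * y j ≤ ∑ j, w j * x j := by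
  rcases h.eq_or_lt with heq | hlt
  · rw [toLex.injective heq]
    exact Eventually.of_forall fun _ _ _ _ ↦ le_rfl
  · obtain ⟨k, c, hc, hbound⟩ := exists_eventually_mul_le_sum_sub_of_toLex_lt hlt
    filter_upwards [hbound] with ρ hρ w hw₀ hw
    exact sub_nonneg.1 <| (mul_nonneg (hw₀ k) hc.le).trans (hρ w hw₀ hw)

end DecayingWeights

section AdjacentSwaps

variable {ι α : Type*} [LinearOrder ι]

section

variable [WellFoundedLT ι] [LinearOrder α] {x y : ι → α} {a b : ι}

theorem eq_at_of_toLex_le_of_toLex_comp_swap_le (hab : a < b) (hyx : toLex y ≤ toLex x)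
    (hxy : toLex (x ∘ Equiv.swap a b) ≤ toLex (y ∘ Equiv.swap a b)) (j : ι)
    (hpair : a ≤ j → x a = y a ∧ x b = y b) : x j = y j := by
  induction j using WellFoundedLT.induction with
  | ind j ih =>
    have hbefore : ∀ i < j, x i = y i := fun i hi ↦ ih i hi fun hai ↦ hpair (hai.trans hi.le)
    have hbefore_swap : ∀ i < j, x (Equiv.swap a b i) = y (Equiv.swap a b i) := by
      intro i hi
      rcases eq_or_ne i a with rfl | hia
      · simpa using (hpair hi.le).2
      rcases eq_or_ne i b with rfl | hib
      · simpa using (hpair (hab.trans hi).le).1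
      rw [Equiv.swap_apply_of_ne_of_ne hia hib, hbefore i hi]
    rcases eq_or_ne j a with rfl | hja
    · exact (hpair le_rfl).1
    rcases eq_or_ne j b with rfl | hjb
    · exact (hpair hab.le).2
    refine le_antisymm ?_ (Pi.apply_le_of_toLex hyx fun i hi ↦ (hbefore i hi).symm)
    simpa [Equiv.swap_apply_of_ne_of_ne hja hjb] using Pi.apply_le_of_toLex hxy hbefore_swap

theorem eq_or_lt_of_toLex_le_of_toLex_comp_swap_le (hab : a ⋖ b) (hyx : toLex y ≤ toLex x)
    (hxy : toLex (x ∘ Equiv.swap a b) ≤ toLex (y ∘ Equiv.swap a b)) :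
    x = y ∨ (∀ j < a, x j = y j) ∧ x b < y b := by
  have eq_at := eq_at_of_toLex_le_of_toLex_comp_swap_le hab.lt hyx hxy
  have hbefore : ∀ j < a, x j = y j := fun j hj ↦ eq_at j fun haj ↦ absurd hj haj.not_gt
  have hswap {j : ι} (hj : j < a) : Equiv.swap a b j = j :=
    Equiv.swap_apply_of_ne_of_ne hj.ne (hj.trans hab.lt).ne
  have hb : x b ≤ y b := by
    simpa using Pi.apply_le_of_toLex (i := a) hxy fun j hj ↦ by simp [hswap hj, hbefore j hj]
  rcases hb.lt_or_eq with hlt | heq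
  · exact .inr ⟨hbefore, hlt⟩
  have ha : x a = y a := by
    refine le_antisymm ?_ (Pi.apply_le_of_toLex hyx fun j hj ↦ (hbefore j hj).symm)
    suffices ∀ j < b, (x ∘ Equiv.swap a b) j = (y ∘ Equiv.swap a b) j by
      simpa using Pi.apply_le_of_toLex hxy this
    intro j hj
    rcases (hab.le_of_lt hj).lt_or_eq with hja | rfl
    · simp [hswap hja, hbefore j hja]
    · simpa using heq
  exact .inl <| funext fun j ↦ eq_at j fun _ ↦ ⟨ha, heq⟩

end

theorem lt_apply_of_forall_lt_apply_eq {σ : Equiv.Perm ι} {j : ι} (hfix : ∀ i < j, σ i = i)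
    (hj : σ j ≠ j) : j < σ j :=
  lt_of_le_of_ne (not_lt.1 fun hlt ↦ hj (σ.injective (hfix _ hlt))) hj.symm

theorem perm_adjacent_swap_induction [Finite ι] {motive : Equiv.Perm ι → Prop} (one : motive 1)
    (swap_mul : ∀ (σ : Equiv.Perm ι) (j a b : ι), a ⋖ b → j ≤ a → (∀ i < j, σ i = i) → σ j = b →
      motive (Equiv.swap a b * σ) → motive σ)
    (σ : Equiv.Perm ι) : motive σ := by
  induction hs : toLex (σ : ι → ι) using WellFoundedLT.induction generalizing σ with
  | ind s ih =>
    subst hs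
    by_cases hσ : σ = 1
    · exact hσ ▸ one
    obtain ⟨j, hj, hmin⟩ := wellFounded_lt.has_min {j | σ j ≠ j}
      (not_forall.1 fun h ↦ hσ (Equiv.ext h))
    have hfix : ∀ i < j, σ i = i := fun i hi ↦ not_not.1 fun hne ↦ hmin i hne hi
    obtain ⟨a, hja, hab⟩ := exists_le_covBy_of_lt (lt_apply_of_forall_lt_apply_eq hfix hj)
    refine swap_mul σ j a (σ j) hab hja hfix rfl (ih _ ⟨j, fun i hi ↦ ?_, ?_⟩ _ rfl)
    · have hia : i < a := hi.trans_le hja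
      simp [hfix i hi, Equiv.swap_apply_of_ne_of_ne hia.ne (hia.trans hab.lt).ne]
    · simpa using hab.lt

end AdjacentSwaps

section Dominance

variable {M : Type*} {m : ℕ}

/-- `x` is lexicographically at least as good as `y`: at the most preferred object
on which they differ, `x` has the larger entry. -/
def LexDominates (P : M ≃ Fin m) (x y : M → ℝ) : Prop :=
  toLex (y ∘ P.symm) ≤ toLex (x ∘ P.symm)

theorem nbhd_trans_swap (P : M ≃ Fin m) {a b : Fin m} (hab : a ⋖ b) :
    Nbhd P (P.trans (Equiv.swap a b)) := by
  have hb : (b : ℕ) = a + 1 := (Nat.covBy_iff_add_one_eq.1 (Fin.covBy_iff.1 hab)).symm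
  exact ⟨a, hb ▸ b.isLt, by congr; exact Fin.ext hb⟩

theorem Nbhd.symm {P P' : M ≃ Fin m} (h : Nbhd P P') : Nbhd P' P := by
  obtain ⟨k, hk, rfl⟩ := h
  exact ⟨k, hk, by simp [Equiv.trans_assoc]⟩

theorem preference_induction (P : M ≃ Fin m) {motive : (M ≃ Fin m) → Prop} (self : motive P)
    (swap : ∀ (Q : M ≃ Fin m) (j a b : Fin m), a ⋖ b → j ≤ a → (∀ i < j, Q (P.symm i) = i) →
      Q (P.symm j) = b → motive (Q.trans (Equiv.swap a b)) → motive Q)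
    (Q : M ≃ Fin m) : motive Q := by
  have hσ : ∀ σ : Equiv.Perm (Fin m), motive (P.trans σ) :=
    perm_adjacent_swap_induction self fun σ j a b hab hja hfix hj hmotive ↦
      swap (P.trans σ) j a b hab hja (by simpa using hfix) (by simpa using hj) hmotive
  simpa [← Equiv.trans_assoc] using hσ (P.symm.trans Q)

theorem sum_eq_of_nbhd [Fintype M] {f : (M ≃ Fin m) → M → ℝ}
    (hf : ∀ Q Q', Nbhd Q Q' → ∑ j, f Q' j ≤ ∑ j, f Q j) (P Q : M ≃ Fin m) :
    ∑ j, f Q j = ∑ j, f P j := by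
  induction Q using preference_induction P with
  | self => rfl
  | swap Q _ a b hab _ _ _ ih =>
    have hnbhd := nbhd_trans_swap Q hab
    exact (le_antisymm (hf _ _ hnbhd.symm) (hf _ _ hnbhd)).trans ih

theorem eq_or_lt_of_lexDominates_swap {Q : M ≃ Fin m} {a b : Fin m} (hab : a ⋖ b) {x y : M → ℝ}
    (hxy : LexDominates Q x y) (hyx : LexDominates (Q.trans (Equiv.swap a b)) y x) :
    x = y ∨ (∀ i < a, x (Q.symm i) = y (Q.symm i)) ∧ x (Q.symm b) < y (Q.symm b) := by
  have hyx' : toLex ((x ∘ Q.symm) ∘ Equiv.swap a b) ≤ toLex ((y ∘ Q.symm) ∘ Equiv.swap a b) := by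
    simpa [LexDominates, comp_assoc] using hyx
  exact (eq_or_lt_of_toLex_le_of_toLex_comp_swap_le hab hxy hyx').imp_left
    Q.symm.surjective.injective_comp_right.eq_iff.1

theorem lexDominates_of_nbhd {f : (M ≃ Fin m) → M → ℝ}
    (hf : ∀ Q Q', Nbhd Q Q' → LexDominates Q (f Q) (f Q')) (P Q : M ≃ Fin m) :
    LexDominates P (f P) (f Q) := by
  induction Q using preference_induction P with
  | self => exact le_rfl
  | swap Q j a b hab hja hfix hj ih =>
    refine le_trans ?_ ih
    have hnbhd := nbhd_trans_swap Q hab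
    rcases eq_or_lt_of_lexDominates_swap hab (hf _ _ hnbhd) (hf _ _ hnbhd.symm) with
      heq | ⟨habove, hlt⟩
    · rw [← heq]
    have hsymm {i k : Fin m} (h : Q (P.symm i) = k) : Q.symm k = P.symm i := by simp [← h]
    refine le_of_lt ⟨j, fun i hi ↦ ?_, ?_⟩
    · simpa [hsymm (hfix i hi)] using habove i (hi.trans_le hja)
    · simpa [hsymm hj] using hlt

theorem consistent_pow {ρ : ℝ} (hρ₀ : 0 < ρ) (hρ₁ : ρ < 1) (P : M ≃ Fin m) :
    Consistent (fun j ↦ ρ ^ (P j : ℕ)) P :=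
  fun _ _ hab ↦ pow_lt_pow_right_of_lt_one₀ hρ₀ hρ₁ hab

variable [Fintype M] [Nonempty M] {u x y : M → ℝ} {P : M ≃ Fin m} {r : ℝ}

/-- `x` yields at least the expected utility of `y` for every utility function that is consistent
with `P` and satisfies URBI(`r`). -/
def PartiallyDominates (r : ℝ) (P : M ≃ Fin m) (x y : M → ℝ) : Prop :=
  ∀ u : M → ℝ, (∀ j, 0 ≤ u j) → Consistent u P → URBI u r →
    ∑ j, u j * y j ≤ ∑ j, u j * x j

theorem minU_le (u : M → ℝ) (j : M) : minU u ≤ u j :=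
  inf'_le u (mem_univ j)

theorem minU_nonneg (hu : ∀ j, 0 ≤ u j) : 0 ≤ minU u :=
  le_inf' _ _ fun j _ ↦ hu j

theorem minU_add_const (u : M → ℝ) (c : ℝ) : minU (fun j ↦ u j + c) = minU u + c :=
  (map_finset_inf' (OrderIso.addRight c) univ_nonempty u).symm

theorem URBI.add_const (h : URBI u r) (c : ℝ) : URBI (fun j ↦ u j + c) r := by
  intro a b hab
  simpa [minU_add_const] using h a b (by simpa using hab)

theorem URBI.mono {r' : ℝ} (h : URBI u r) (hr : r ≤ r') : URBI u r' := fun a b hab ↦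
  (h a b hab).trans <| mul_le_mul_of_nonneg_right hr (sub_nonneg.2 (minU_le u a))

theorem URBI.decaysBy (h : URBI u r) (hu : Consistent u P) :
    DecaysBy r fun k ↦ u (P.symm k) - minU u :=
  fun i j hij ↦ h _ _ (hu _ _ (by simpa using hij))

theorem DecaysBy.urbi (hw : DecaysBy r (u ∘ P.symm)) (hr : r ≤ 1) (hu₀ : ∀ j, 0 ≤ u j)
    (hu : Consistent u P) : URBI u r := by
  intro a b hba
  have hab : P a < P b := by
    by_contra! hle
    rcases hle.lt_or_eq with hlt | heq
    · exact hba.not_gt (hu b a hlt)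
    · exact hba.ne (congrArg u (P.injective heq))
  have hdecay : u b ≤ r * u a := by simpa using hw hab
  calc u b - minU u ≤ r * u a - r * minU u :=
        sub_le_sub hdecay (mul_le_of_le_one_left (minU_nonneg hu₀) hr)
    _ = r * (u a - minU u) := (mul_sub ..).symm

theorem urbi_pow {ρ : ℝ} (hρ₀ : 0 < ρ) (hρ₁ : ρ < 1) (P : M ≃ Fin m) :
    URBI (fun j ↦ ρ ^ (P j : ℕ)) ρ := by
  refine DecaysBy.urbi (P := P) ?_ hρ₁.le (fun j ↦ by positivity) (consistent_pow hρ₀ hρ₁ P)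
  simpa [comp_def] using decaysBy_pow hρ₀.le hρ₁.le m

theorem PartiallyDominates.lexDominates (hr : 0 < r) (h : PartiallyDominates r P x y) :
    LexDominates P x y := by
  by_contra hlex
  have hlt : toLex (x ∘ P.symm) < toLex (y ∘ P.symm) := not_le.1 hlex
  obtain ⟨ρ, ⟨hρ₀, hρ⟩, hsum⟩ := ((eventually_mem_set.2 (Ioo_mem_nhdsGT (lt_min hr one_pos))).and
    (eventually_sum_mul_lt_of_toLex_lt hlt)).exists
  obtain ⟨hρr, hρ₁⟩ := lt_min_iff.1 hρ
  have hle := h (fun j ↦ ρ ^ (P j : ℕ)) (fun j ↦ by positivity) (consistent_pow hρ₀ hρ₁ P)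
    ((urbi_pow hρ₀ hρ₁ P).mono hρr.le)
  refine hle.not_gt ?_
  simpa [← Equiv.sum_comp P] using
    hsum (fun k ↦ ρ ^ (k : ℕ)) (fun k ↦ by positivity) (decaysBy_pow hρ₀.le hρ₁.le m)

-- Adding a large constant to a utility function makes the total probabilities decisive.
theorem PartiallyDominates.sum_le (hr : 0 < r) (h : PartiallyDominates r P x y) :
    ∑ j, y j ≤ ∑ j, x j := by
  obtain ⟨ρ, hρ₀, hρ⟩ := exists_between (lt_min hr one_pos)
  obtain ⟨hρr, hρ₁⟩ := lt_min_iff.1 hρ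
  set u : M → ℝ := fun j ↦ ρ ^ (P j : ℕ)
  have hshifted (n : ℕ) : ∑ j, (u j + n) * y j ≤ ∑ j, (u j + n) * x j :=
    h _ (fun j ↦ by positivity)
      (fun a b hab ↦ by simpa using consistent_pow hρ₀ hρ₁ P a b hab)
      (((urbi_pow hρ₀ hρ₁ P).mono hρr.le).add_const n)
  simp only [add_mul, sum_add_distrib, ← mul_sum] at hshifted
  by_contra! hlt
  obtain ⟨n, hn⟩ := exists_lt_nsmul (sub_pos.2 hlt) (∑ j, u j * x j - ∑ j, u j * y j)
  rw [nsmul_eq_mul, mul_sub] at hn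
  linarith [hshifted n]

theorem LexDominates.eventually_partiallyDominates (h : LexDominates P x y)
    (hsum : ∑ j, y j ≤ ∑ j, x j) : ∀ᶠ r in 𝓝[>] (0 : ℝ), PartiallyDominates r P x y := by
  filter_upwards [eventually_sum_mul_le_of_toLex_le h] with r hr u hu₀ hu hurbi
  have hnormalized : ∑ j, (u j - minU u) * y j ≤ ∑ j, (u j - minU u) * x j := by
    simpa only [comp_apply, Equiv.sum_comp P.symm fun j ↦ (u j - minU u) * y j,
      Equiv.sum_comp P.symm fun j ↦ (u j - minU u) * x j] using
      hr _ (fun k ↦ sub_nonneg.2 (minU_le u _)) (hurbi.decaysBy hu)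
  have hmin : minU u * ∑ j, y j ≤ minU u * ∑ j, x j :=
    mul_le_mul_of_nonneg_left hsum (minU_nonneg hu₀)
  simp only [sub_mul, sum_sub_distrib, ← mul_sum] at hnormalized
  linarith

end Dominance

theorem LocalPSP.partiallyDominates {N M : Type*} [DecidableEq N] [Fintype M] [Nonempty M] {m : ℕ}
    {φ : (N → M ≃ Fin m) → N → M → ℝ} {r : ℝ} (hloc : LocalPSP φ r) (P : N → M ≃ Fin m) (i : N)
    {Q Q' : M ≃ Fin m} (h : Nbhd Q Q') :
    PartiallyDominates r Q (φ (update P i Q) i) (φ (update P i Q') i) := by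
  simpa [PartiallyDominates] using hloc (update P i Q) i Q' (by simpa using h)

theorem weak_local_sufficiency_psp_general {N M : Type*} [Finite N] [DecidableEq N] [Fintype M]
    [Nonempty M] {m : ℕ} {r : ℝ} (hr : 0 < r) {φ : (N → M ≃ Fin m) → N → M → ℝ}
    (hloc : LocalPSP φ r) : ∃ r' : ℝ, 0 < r' ∧ PSP φ r' := by
  have hdom (P : N → M ≃ Fin m) (i : N) (P' : M ≃ Fin m) :
      ∀ᶠ r' in 𝓝[>] 0, PartiallyDominates r' (P i) (φ P i) (φ (update P i P') i) := by
    have hlex := lexDominates_of_nbhd (f := fun Q ↦ φ (update P i Q) i)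
      (fun _ _ h ↦ (hloc.partiallyDominates P i h).lexDominates hr) (P i) P'
    have hsum := sum_eq_of_nbhd (f := fun Q ↦ φ (update P i Q) i)
      (fun _ _ h ↦ (hloc.partiallyDominates P i h).sum_le hr) (P i) P'
    simpa using hlex.eventually_partiallyDominates hsum.le
  have hall : ∀ᶠ r' in 𝓝[>] (0 : ℝ), PSP φ r' :=
    eventually_all.2 fun P ↦ eventually_all.2 fun i ↦ eventually_all.2 fun P' ↦ hdom P i P'
  exact (eventually_mem_nhdsWithin.and hall).exists

/-- **Corollary 1 (Weak local sufficiency).**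
Given a setting `(N, M, q)`, if a mechanism `φ` is `r`-locally partially
strategyproof for some `r > 0`, then it is `r'`-partially strategyproof
for some `r' > 0`. -/
theorem weak_local_sufficiency_psp
    {N M : Type*} [Fintype N] [DecidableEq N] [Fintype M] [DecidableEq M] [Nonempty M]
    {m : ℕ} (hm : Fintype.card M = m)
    (q : M → ℕ) (hq : ∀ j, 1 ≤ q j) (hcap : Fintype.card N ≤ ∑ j, q j)
    (r : ℝ) (hr : 0 < r)
    (φ : (N → M ≃ Fin m) → N → M → ℝ) (hφ : Feasible q φ)
    (hloc : LocalPSP φ r) :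
    ∃ r' : ℝ, 0 < r' ∧ PSP φ r' := by
  exact weak_local_sufficiency_psp_general hr hloc
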